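/- Let $d \in \mathbb{N}$, let $K \subseteq \mathbb{R}^d$ be a compact set, and let $(H_\varepsilon)$ and $(H'_\varepsilon)$ be two nets of smooth functions on $\mathbb{R}^d \times \mathbb{R}^d$ supported in $K \times K$, both of logarithmic type (for every compact $A$ and every $l$, $p_{A,l}(H_\varepsilon) = O(|\ln \varepsilon|)$ and $p_{A,l}(H'_\varepsilon) = O(|\ln \varepsilon|)$ as $\varepsilon \to 0$), whose difference $(H_\varepsilon - H'_\varepsilon)$ is negligible. Let $S_\varepsilon$ and $S'_\varepsilon$ be the corresponding exponential kernels, i.e. $S_\varepsilon = \sum_{n=1}^{\infty} \frac{L_{n,\varepsilon}}{n!}$ with $L_{1,\varepsilon} = H_\varepsilon$ and $L_{n+1,\varepsilon}(x,y) = \int_K H_\varepsilon(x,\xi) L_{n,\varepsilon}(\xi,y)\, \mathrm{d}\xi$, and similarly for $S'_\varepsilon$ from $H'_\varepsilon$. Then the net $(S_\varepsilon - S'_\varepsilon)$ is negligible. -/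

import Mathlib

open MeasureTheory Set Filter

noncomputable def dirDeriv {E : Type*} [NormedAddCommGroup E] [NormedSpace ℝ E]
    (v : E) (f : E → ℂ) : E → ℂ := fun x => fderiv ℝ f x v

noncomputable def itDeriv {E : Type*} [NormedAddCommGroup E] [NormedSpace ℝ E] :
    List E → (E → ℂ) → E → ℂ
  | [] => fun f => f
  | v :: vs => fun f => itDeriv vs (dirDeriv v f)

/-- The standard basis directions of the product space `ℝ^m × ℝ^n`. -/
def prodDirs (m n : ℕ) : Set ((Fin m → ℝ) × (Fin n → ℝ)) :=
  {v | (∃ i, v = (Pi.single i (1:ℝ), 0)) ∨ ∃ j, v = (0, Pi.single j (1:ℝ))}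

/-- The standard basis directions of `ℝ^d`. -/
def stdDirs (d : ℕ) : Set (Fin d → ℝ) := {v | ∃ i, v = Pi.single i (1:ℝ)}

/-- The seminorm `p_{A,l}(f)`: the sup over `x ∈ A` and over all partial derivatives
(iterated directional derivatives along basis directions from `B`) of order `≤ l`. -/
noncomputable def pSemi {E : Type*} [NormedAddCommGroup E] [NormedSpace ℝ E]
    (B A : Set E) (l : ℕ) (f : E → ℂ) : ℝ :=
  sSup {r | ∃ vs : List E, vs.length ≤ l ∧ (∀ v ∈ vs, v ∈ B) ∧ ∃ x ∈ A, r = ‖itDeriv vs f x‖}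

/-- A net `(f_ε)_{ε ∈ (0,1]}` is moderate if every seminorm grows at most
polynomially in `1/ε` as `ε → 0`. -/
def IsModerate {E : Type*} [NormedAddCommGroup E] [NormedSpace ℝ E]
    (B : Set E) (f : ℝ → E → ℂ) : Prop :=
  ∀ A : Set E, IsCompact A → ∀ l : ℕ, ∃ q : ℕ, ∃ C > (0:ℝ), ∃ ε₀ ∈ Ioc (0:ℝ) 1,
    ∀ ε ∈ Ioc (0:ℝ) 1, ε ≤ ε₀ → pSemi B A l (f ε) ≤ C * ε ^ (-(q:ℤ))

/-- A net `(f_ε)_{ε ∈ (0,1]}` is negligible if every seminorm is `O(ε^p)` for all `p`. -/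
def IsNegligible {E : Type*} [NormedAddCommGroup E] [NormedSpace ℝ E]
    (B : Set E) (f : ℝ → E → ℂ) : Prop :=
  ∀ A : Set E, IsCompact A → ∀ l : ℕ, ∀ p : ℕ, ∃ C > (0:ℝ), ∃ ε₀ ∈ Ioc (0:ℝ) 1,
    ∀ ε ∈ Ioc (0:ℝ) 1, ε ≤ ε₀ → pSemi B A l (f ε) ≤ C * ε ^ p

/-- The iterated kernels: `iterKer S H n` is the kernel `L_{n+1}` of the paper,
i.e. `L_1 = H` and `L_{n+1}(x,y) = ∫_S H(x,ξ) L_n(ξ,y) dξ` for `n ≥ 1`. -/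
noncomputable def iterKer {d : ℕ} (S : Set (Fin d → ℝ))
    (H : (Fin d → ℝ) × (Fin d → ℝ) → ℂ) : ℕ → (Fin d → ℝ) × (Fin d → ℝ) → ℂ
  | 0 => H
  | n + 1 => fun q => ∫ ξ in S, H (q.1, ξ) * iterKer S H n (ξ, q.2)

/-!
Given a compact set `A`, let `U` be a bounded open set with `S ⊆ U` and `A ⊆ U × U`, and take `C^l`
norms on `U × U`.  Telescoping `Lₙ₊₁ - Lₙ₊₁' = (H - H') ∘ Lₙ + H' ∘ (Lₙ - Lₙ')`, and using that a
coordinate derivative of a composition of kernels hits only one of the two factors, one bounds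
`Lₙ - Lₙ'` by `n (V M)^(n-1) δ`, where `V = vol S`, `M` bounds `H` and `H' = H - (H - H')`, and `δ`
bounds `H - H'`.  Summing against `1 / n!` leaves the factor `exp (V M)`, which for
`M = O(|log ε|)` is `O(ε^(-q))` for some `q` and is absorbed by `δ = O(ε^(p + q))`.
-/

open scoped ContDiff Topology

section DirectionalDerivatives

variable {E : Type*} [NormedAddCommGroup E] [NormedSpace ℝ E] {f g : E → ℂ}

lemma contDiff_dirDeriv (v : E) (hf : ContDiff ℝ ∞ f) : ContDiff ℝ ∞ (dirDeriv v f) :=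
  (hf.fderiv_right (m := ∞) (by simp)).clm_apply contDiff_const

lemma contDiff_itDeriv (vs : List E) (hf : ContDiff ℝ ∞ f) : ContDiff ℝ ∞ (itDeriv vs f) := by
  induction vs generalizing f with
  | nil => exact hf
  | cons v _ ih => exact ih (contDiff_dirDeriv v hf)

lemma dirDeriv_add (v : E) (hf : Differentiable ℝ f) (hg : Differentiable ℝ g) :
    dirDeriv v (f + g) = dirDeriv v f + dirDeriv v g := by
  funext x
  simp [dirDeriv, fderiv_add (hf x) (hg x)]

lemma itDeriv_add (vs : List E) (hf : ContDiff ℝ ∞ f) (hg : ContDiff ℝ ∞ g) :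
    itDeriv vs (f + g) = itDeriv vs f + itDeriv vs g := by
  induction vs generalizing f g with
  | nil => rfl
  | cons v vs ih =>
    simp only [itDeriv, dirDeriv_add v (hf.differentiable (by simp)) (hg.differentiable (by simp))]
    exact ih (contDiff_dirDeriv v hf) (contDiff_dirDeriv v hg)

lemma dirDeriv_const_smul (v : E) (c : ℂ) (f : E → ℂ) :
    dirDeriv v (c • f) = c • dirDeriv v f := by
  funext x
  simp [dirDeriv, fderiv_const_smul_field]

lemma itDeriv_const_smul (vs : List E) (c : ℂ) (f : E → ℂ) :
    itDeriv vs (c • f) = c • itDeriv vs f := by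
  induction vs generalizing f with
  | nil => rfl
  | cons v vs ih => simp only [itDeriv, dirDeriv_const_smul, ih]

lemma eqOn_dirDeriv {U : Set E} (hU : IsOpen U) (hfg : EqOn f g U) (v : E) :
    EqOn (dirDeriv v f) (dirDeriv v g) U := fun x hx => by
  rw [dirDeriv, dirDeriv, (hfg.eventuallyEq_of_mem (hU.mem_nhds hx)).fderiv_eq]

lemma eqOn_itDeriv {U : Set E} (hU : IsOpen U) (hfg : EqOn f g U) (vs : List E) :
    EqOn (itDeriv vs f) (itDeriv vs g) U := by
  induction vs generalizing f g with
  | nil => exact hfg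
  | cons v _ ih => exact ih (eqOn_dirDeriv hU hfg v)

end DirectionalDerivatives

section DerivBoundOn

variable {E : Type*} [NormedAddCommGroup E] [NormedSpace ℝ E]

/-- All iterated derivatives of `f` of order at most `l` along directions in `B` are bounded by `M`
on `A`. Unlike `pSemi B A l f ≤ M`, this is meaningful also when the derivatives are unbounded,
where `pSemi` takes the junk value `0`. -/
def DerivBoundOn (B A : Set E) (l : ℕ) (M : ℝ) (f : E → ℂ) : Prop :=
  ∀ vs : List E, vs.length ≤ l → (∀ v ∈ vs, v ∈ B) → ∀ x ∈ A, ‖itDeriv vs f x‖ ≤ M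

variable {B A U : Set E} {l : ℕ} {M N : ℝ} {f g : E → ℂ}

lemma DerivBoundOn.norm_le (h : DerivBoundOn B A l M f) {x : E} (hx : x ∈ A) : ‖f x‖ ≤ M :=
  h [] (by simp) (by simp) x hx

lemma DerivBoundOn.mono (h : DerivBoundOn B A l M f) {A' : Set E} {k : ℕ} (hA : A' ⊆ A)
    (hk : k ≤ l) (hMN : M ≤ N) : DerivBoundOn B A' k N f :=
  fun vs hvs hB x hx => (h vs (hvs.trans hk) hB x (hA hx)).trans hMN

lemma DerivBoundOn.congr (h : DerivBoundOn B U l M f) (hU : IsOpen U) (hfg : EqOn f g U) :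
    DerivBoundOn B U l M g :=
  fun vs hvs hB x hx => eqOn_itDeriv hU hfg vs hx ▸ h vs hvs hB x hx

protected lemma DerivBoundOn.dirDeriv (h : DerivBoundOn B A (l + 1) M f) {v : E} (hv : v ∈ B) :
    DerivBoundOn B A l M (dirDeriv v f) :=
  fun vs hvs hB => h (v :: vs) (by simpa using hvs) (by simpa [hv] using hB)

lemma DerivBoundOn.const_smul (h : DerivBoundOn B A l M f) (c : ℂ) :
    DerivBoundOn B A l (‖c‖ * M) (c • f) := by
  intro vs hvs hB x hx
  rw [itDeriv_const_smul, Pi.smul_apply, norm_smul]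
  exact mul_le_mul_of_nonneg_left (h vs hvs hB x hx) (norm_nonneg c)

lemma DerivBoundOn.add (hfM : DerivBoundOn B A l M f) (hgN : DerivBoundOn B A l N g)
    (hf : ContDiff ℝ ∞ f) (hg : ContDiff ℝ ∞ g) : DerivBoundOn B A l (M + N) (f + g) := by
  intro vs hvs hB x hx
  rw [itDeriv_add vs hf hg]
  exact norm_add_le_of_le (hfM vs hvs hB x hx) (hgN vs hvs hB x hx)

lemma DerivBoundOn.sub (hfM : DerivBoundOn B A l M f) (hgN : DerivBoundOn B A l N g)
    (hf : ContDiff ℝ ∞ f) (hg : ContDiff ℝ ∞ g) : DerivBoundOn B A l (M + N) (f - g) := by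
  simpa [sub_eq_add_neg] using hfM.add (hgN.const_smul (-1)) hf (hg.const_smul (-1 : ℂ))

lemma DerivBoundOn.pSemi_le (h : DerivBoundOn B A l M f) (hM : 0 ≤ M) : pSemi B A l f ≤ M := by
  refine Real.sSup_le ?_ hM
  rintro _ ⟨vs, hvs, hvsB, x, hx, rfl⟩
  exact h vs hvs hvsB x hx

lemma finite_lists_length_le {α : Type*} {s : Set α} (hs : s.Finite) (l : ℕ) :
    {as : List α | as.length ≤ l ∧ ∀ a ∈ as, a ∈ s}.Finite := by
  have := hs.to_subtype
  refine ((List.finite_length_le s l).image (List.map (↑))).subset ?_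
  rintro as ⟨hl, has⟩
  lift as to List s using has
  exact ⟨as, by simpa using hl, rfl⟩

lemma bddAbove_norm_itDeriv (hB : B.Finite) (hA : IsCompact A) (l : ℕ) (hf : ContDiff ℝ ∞ f) :
    BddAbove {r | ∃ vs : List E, vs.length ≤ l ∧ (∀ v ∈ vs, v ∈ B) ∧
      ∃ x ∈ A, r = ‖itDeriv vs f x‖} := by
  have hbdd : BddAbove (⋃ vs ∈ {vs : List E | vs.length ≤ l ∧ ∀ v ∈ vs, v ∈ B},
      (fun x => ‖itDeriv vs f x‖) '' A) :=
    (finite_lists_length_le hB l).bddAbove_biUnion.2 fun vs _ =>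
      hA.bddAbove_image (contDiff_itDeriv vs hf).continuous.norm.continuousOn
  refine hbdd.mono ?_
  rintro _ ⟨vs, hvs, hvsB, x, hx, rfl⟩
  exact mem_biUnion (show vs ∈ {vs : List E | _} from ⟨hvs, hvsB⟩) (mem_image_of_mem _ hx)

lemma derivBoundOn_pSemi (hB : B.Finite) (hA : IsCompact A) (l : ℕ) (hf : ContDiff ℝ ∞ f) :
    DerivBoundOn B A l (pSemi B A l f) f :=
  fun vs hvs hvsB x hx =>
    le_csSup (bddAbove_norm_itDeriv hB hA l hf) ⟨vs, hvs, hvsB, x, hx, rfl⟩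

end DerivBoundOn

section Series

variable {E ι : Type*} [NormedAddCommGroup E] [NormedSpace ℝ E] [Finite ι]
  (b : Module.Basis ι ℝ E) {U : Set E} {u : ℕ → ℝ} {F : ℕ → E → ℂ}

lemma dirDeriv_tsum (hU : IsOpen U) (hu : Summable u) (hF : ∀ k, Differentiable ℝ (F k))
    (hFu : ∀ k, DerivBoundOn (range b) U 1 (u k) (F k)) (v : E) :
    EqOn (dirDeriv v fun x => ∑' k, F k x) (fun x => ∑' k, dirDeriv v (F k) x) U := by
  intro x hx
  obtain ⟨C, -, hC⟩ := b.exists_opNorm_le (F := ℂ)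
  have hderiv : ∀ k, ∀ y ∈ U, ‖fderiv ℝ (F k) y‖ ≤ C * u k := fun k y hy =>
    hC ((norm_nonneg _).trans ((hFu k).norm_le hy)) fun i =>
      hFu k [b i] (by simp) (by simp) y hy
  have hsum : Summable fun k => fderiv ℝ (F k) x :=
    .of_norm_bounded (hu.mul_left C) fun k => hderiv k x hx
  obtain ⟨r, hr, hrU⟩ := Metric.isOpen_iff.1 hU x hx
  have hfderiv := hasFDerivAt_tsum_of_isPreconnected (hu.mul_left C) Metric.isOpen_ball
    (convex_ball x r).isPreconnected (fun k y _ => (hF k y).hasFDerivAt)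
    (fun k y hy => hderiv k y (hrU hy)) (Metric.mem_ball_self hr)
    (.of_norm_bounded hu fun k => (hFu k).norm_le hx) (Metric.mem_ball_self hr)
  simp only [dirDeriv, hfderiv.fderiv]
  exact (ContinuousLinearMap.apply ℝ ℂ v).map_tsum hsum

lemma derivBoundOn_tsum (hU : IsOpen U) {s : ℝ} (hu : HasSum u s)
    (hF : ∀ k, ContDiff ℝ ∞ (F k)) {l : ℕ} (hFu : ∀ k, DerivBoundOn (range b) U l (u k) (F k)) :
    DerivBoundOn (range b) U l s fun x => ∑' k, F k x := by
  intro vs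
  induction vs generalizing F l with
  | nil => exact fun _ _ x hx => tsum_of_norm_bounded hu fun k => (hFu k).norm_le hx
  | cons v vs ih =>
    intro hl hvs x hx
    obtain ⟨k, rfl⟩ : ∃ k, l = k + 1 := ⟨l - 1, by grind⟩
    have hdir := dirDeriv_tsum b hU hu.summable (fun n => (hF n).differentiable (by simp))
      (fun n => (hFu n).mono subset_rfl (by simp) le_rfl) v
    simp only [itDeriv, eqOn_itDeriv hU hdir vs hx]
    exact ih (fun n => contDiff_dirDeriv v (hF n)) (fun n => (hFu n).dirDeriv (hvs v (by simp)))
      (by simpa using hl) (fun w hw => hvs w (by simp [hw])) x hx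

end Series

section ParametricIntegral

variable {X Z F : Type*} [NormedAddCommGroup X] [NormedSpace ℝ X]
  [NormedAddCommGroup Z] [NormedSpace ℝ Z] [MeasurableSpace Z] [BorelSpace Z]
  [NormedAddCommGroup F] [NormedSpace ℝ F]
  {μ : Measure Z} [IsFiniteMeasureOnCompacts μ] {S : Set Z} {Φ : X × Z → F}

lemma hasFDerivAt_setIntegral_of_contDiff (hS : IsCompact S) (hΦ : ContDiff ℝ 1 Φ) (x : X) :
    HasFDerivAt (fun x => ∫ ξ in S, Φ (x, ξ) ∂μ)
      (∫ ξ in S, (fderiv ℝ Φ (x, ξ)).comp (.inl ℝ X Z) ∂μ) x := by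
  have hfderiv : Continuous fun p => (fderiv ℝ Φ p).comp (.inl ℝ X Z) :=
    (hΦ.continuous_fderiv one_ne_zero).clm_comp_const _
  have hint : ∀ y, IntegrableOn (fun ξ => Φ (y, ξ)) S μ := fun y =>
    (hΦ.continuous.comp (.prodMk_right y)).continuousOn.integrableOn_compact hS
  have hint' : IntegrableOn (fun ξ => (fderiv ℝ Φ (x, ξ)).comp (.inl ℝ X Z)) S μ :=
    (hfderiv.comp (.prodMk_right x)).continuousOn.integrableOn_compact hS
  obtain ⟨C, hC⟩ := hS.exists_bound_of_continuousOn (hfderiv.comp (.prodMk_right x)).continuousOn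
  have hbound : ∀ᶠ y in 𝓝 x, ∀ ξ ∈ S, ‖(fderiv ℝ Φ (y, ξ)).comp (.inl ℝ X Z)‖ ≤ C + 1 :=
    hS.eventually_forall_of_forall_eventually fun ξ hξ =>
      (hfderiv.norm.continuousAt.eventually_lt_const ((hC ξ hξ).trans_lt (lt_add_one C))).mono
        fun _ => le_of_lt
  exact hasFDerivAt_integral_of_dominated_of_fderiv_le hbound
    (.of_forall fun y => (hint y).aestronglyMeasurable) (hint x) hint'.aestronglyMeasurable
    (ae_restrict_of_forall_mem hS.measurableSet fun ξ hξ y hy => hy ξ hξ)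
    (integrableOn_const hS.measure_lt_top.ne)
    (.of_forall fun ξ y _ => ((hΦ.differentiable one_ne_zero _).hasFDerivAt).comp y
      (hasFDerivAt_prodMk_left y ξ))

lemma fderiv_setIntegral_apply [CompleteSpace F] (hS : IsCompact S) (hΦ : ContDiff ℝ 1 Φ)
    (x v : X) :
    fderiv ℝ (fun x => ∫ ξ in S, Φ (x, ξ) ∂μ) x v = ∫ ξ in S, fderiv ℝ Φ (x, ξ) (v, 0) ∂μ := by
  have hfderiv : Continuous fun ξ => (fderiv ℝ Φ (x, ξ)).comp (.inl ℝ X Z) :=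
    ((hΦ.continuous_fderiv one_ne_zero).comp (.prodMk_right x)).clm_comp_const _
  rw [(hasFDerivAt_setIntegral_of_contDiff hS hΦ x).fderiv,
    ContinuousLinearMap.integral_apply (hfderiv.continuousOn.integrableOn_compact hS)]
  simp

lemma contDiff_setIntegral [CompleteSpace F] [FiniteDimensional ℝ X] (hS : IsCompact S)
    (hΦ : ContDiff ℝ ∞ Φ) : ContDiff ℝ ∞ fun x => ∫ ξ in S, Φ (x, ξ) ∂μ := by
  have hdiff : ∀ {Φ : X × Z → F}, ContDiff ℝ ∞ Φ →
      Differentiable ℝ fun x => ∫ ξ in S, Φ (x, ξ) ∂μ := fun hΦ x =>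
    (hasFDerivAt_setIntegral_of_contDiff hS (hΦ.of_le (by simp)) x).differentiableAt
  refine contDiff_infty.2 fun n => ?_
  induction n generalizing Φ with
  | zero => exact contDiff_zero.2 (hdiff hΦ).continuous
  | succ n ih =>
    rw [Nat.cast_succ]
    refine contDiff_succ_iff_fderiv_apply.2 ⟨hdiff hΦ, fun h => absurd h (by simp), fun v => ?_⟩
    simp only [fderiv_setIntegral_apply hS (hΦ.of_le (by simp))]
    exact ih ((hΦ.fderiv_right (m := ∞) (by simp)).clm_apply contDiff_const)

end ParametricIntegral

section KernelComposition

lemma fderiv_kernel_mul_apply {X Y Z : Type*} [NormedAddCommGroup X] [NormedSpace ℝ X]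
    [NormedAddCommGroup Y] [NormedSpace ℝ Y] [NormedAddCommGroup Z] [NormedSpace ℝ Z]
    {f : X × Z → ℂ} {g : Z × Y → ℂ} (hf : Differentiable ℝ f) (hg : Differentiable ℝ g)
    (q v : X × Y) (ξ : Z) :
    fderiv ℝ (fun p : (X × Y) × Z => f (p.1.1, p.2) * g (p.2, p.1.2)) (q, ξ) (v, 0) =
      dirDeriv (v.1, 0) f (q.1, ξ) * g (ξ, q.2) + f (q.1, ξ) * dirDeriv (0, v.2) g (ξ, q.2) := by
  have hxz : HasFDerivAt (fun p : (X × Y) × Z => (p.1.1, p.2))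
      ((ContinuousLinearMap.fst ℝ X Y).prodMap (.id ℝ Z)) (q, ξ) :=
    ((ContinuousLinearMap.fst ℝ X Y).prodMap (.id ℝ Z)).hasFDerivAt
  have hzy : HasFDerivAt (fun p : (X × Y) × Z => (p.2, p.1.2))
      ((ContinuousLinearMap.snd ℝ (X × Y) Z).prod (.comp (.snd ℝ X Y) (.fst ℝ (X × Y) Z)))
      (q, ξ) :=
    ((ContinuousLinearMap.snd ℝ (X × Y) Z).prod
      (.comp (.snd ℝ X Y) (.fst ℝ (X × Y) Z))).hasFDerivAt
  have hmul := ((hf (q.1, ξ)).hasFDerivAt.comp (q, ξ) hxz).mul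
    ((hg (ξ, q.2)).hasFDerivAt.comp (q, ξ) hzy)
  rw [show fderiv ℝ (fun p : (X × Y) × Z => f (p.1.1, p.2) * g (p.2, p.1.2)) (q, ξ) = _ from
    hmul.fderiv]
  simp [dirDeriv]
  ring

variable {X Y Z : Type*} [MeasurableSpace Z]

/-- The composition `(x, y) ↦ ∫_S f(x,ξ) g(ξ,y) dμ(ξ)` of two kernels. -/
noncomputable def kerComp (μ : Measure Z) (S : Set Z) (f : X × Z → ℂ) (g : Z × Y → ℂ) :
    X × Y → ℂ :=
  fun q => ∫ ξ in S, f (q.1, ξ) * g (ξ, q.2) ∂μ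

section Continuous

variable [TopologicalSpace X] [TopologicalSpace Y] [TopologicalSpace Z] [T2Space Z]
  [OpensMeasurableSpace Z]
  {μ : Measure Z} [IsFiniteMeasureOnCompacts μ] {S : Set Z} {f f' : X × Z → ℂ} {g g' : Z × Y → ℂ}

lemma integrableOn_kernel_mul (hS : IsCompact S) (hf : Continuous f) (hg : Continuous g)
    (q : X × Y) : IntegrableOn (fun ξ => f (q.1, ξ) * g (ξ, q.2)) S μ :=
  (by fun_prop : Continuous fun ξ => f (q.1, ξ) * g (ξ, q.2)).continuousOn.integrableOn_compact hS

lemma kerComp_sub_kerComp (hS : IsCompact S) (hf : Continuous f) (hf' : Continuous f')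
    (hg : Continuous g) (hg' : Continuous g') :
    kerComp μ S f g - kerComp μ S f' g' =
      kerComp μ S (f - f') g + kerComp μ S f' (g - g') := by
  funext q
  have hint := integrableOn_kernel_mul (μ := μ) hS hf hg q
  have hint' := integrableOn_kernel_mul (μ := μ) hS hf' hg' q
  have hint_left := integrableOn_kernel_mul (μ := μ) hS (hf.sub hf') hg q
  have hint_right := integrableOn_kernel_mul (μ := μ) hS hf' (hg.sub hg') q
  simp only [kerComp, Pi.sub_apply, Pi.add_apply] at hint_left hint_right ⊢
  rw [← integral_sub hint hint', ← integral_add hint_left hint_right]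
  congr! 2
  ring

end Continuous

section Smooth

variable [NormedAddCommGroup X] [NormedSpace ℝ X] [NormedAddCommGroup Y] [NormedSpace ℝ Y]
  [NormedAddCommGroup Z] [NormedSpace ℝ Z] [BorelSpace Z]
  {μ : Measure Z} [IsFiniteMeasureOnCompacts μ] {S : Set Z} {f : X × Z → ℂ} {g : Z × Y → ℂ}

lemma contDiff_kerComp [FiniteDimensional ℝ X] [FiniteDimensional ℝ Y] (hS : IsCompact S)
    (hf : ContDiff ℝ ∞ f) (hg : ContDiff ℝ ∞ g) : ContDiff ℝ ∞ (kerComp μ S f g) :=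
  contDiff_setIntegral (Φ := fun p : (X × Y) × Z => f (p.1.1, p.2) * g (p.2, p.1.2)) hS
    (by fun_prop)

lemma dirDeriv_kerComp (hS : IsCompact S) (hf : ContDiff ℝ 1 f) (hg : ContDiff ℝ 1 g)
    (v q : X × Y) :
    dirDeriv v (kerComp μ S f g) q =
      ∫ ξ in S, (dirDeriv (v.1, 0) f (q.1, ξ) * g (ξ, q.2) +
        f (q.1, ξ) * dirDeriv (0, v.2) g (ξ, q.2)) ∂μ := by
  have h := fderiv_setIntegral_apply (μ := μ)
    (Φ := fun p : (X × Y) × Z => f (p.1.1, p.2) * g (p.2, p.1.2)) hS (by fun_prop) q v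
  simp only [fderiv_kernel_mul_apply (hf.differentiable one_ne_zero)
    (hg.differentiable one_ne_zero)] at h
  exact h

lemma dirDeriv_kerComp_fst (hS : IsCompact S) (hf : ContDiff ℝ 1 f) (hg : ContDiff ℝ 1 g)
    (x : X) : dirDeriv (x, 0) (kerComp μ S f g) = kerComp μ S (dirDeriv (x, 0) f) g := by
  funext q
  rw [dirDeriv_kerComp hS hf hg]
  simp [kerComp, dirDeriv, Prod.mk_zero_zero]

lemma dirDeriv_kerComp_snd (hS : IsCompact S) (hf : ContDiff ℝ 1 f) (hg : ContDiff ℝ 1 g)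
    (y : Y) : dirDeriv (0, y) (kerComp μ S f g) = kerComp μ S f (dirDeriv (0, y) g) := by
  funext q
  rw [dirDeriv_kerComp hS hf hg]
  simp [kerComp, dirDeriv, Prod.mk_zero_zero]

end Smooth

lemma norm_kerComp_le {μ : Measure Z} {S : Set Z} (hS : μ S < ⊤) {f : X × Z → ℂ}
    {g : Z × Y → ℂ} {U : Set X} {W : Set Y} {M N : ℝ} (hf : ∀ p ∈ U ×ˢ S, ‖f p‖ ≤ M)
    (hg : ∀ p ∈ S ×ˢ W, ‖g p‖ ≤ N) {q : X × Y} (hq : q ∈ U ×ˢ W) :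
    ‖kerComp μ S f g q‖ ≤ M * N * μ.real S := by
  refine norm_setIntegral_le_of_norm_le_const hS fun ξ hξ => ?_
  have hfξ := hf (q.1, ξ) ⟨hq.1, hξ⟩
  rw [norm_mul]
  exact mul_le_mul hfξ (hg _ ⟨hξ, hq.2⟩) (norm_nonneg _) ((norm_nonneg _).trans hfξ)

end KernelComposition

section CoordinateDerivatives

lemma prodDirs_eq_range (m n : ℕ) :
    prodDirs m n = range ((Pi.basisFun ℝ (Fin m)).prod (Pi.basisFun ℝ (Fin n))) := by
  ext v
  simp [prodDirs, eq_comm]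

protected lemma DerivBoundOn.kerComp {m k n : ℕ} {μ : Measure (Fin k → ℝ)}
    [IsFiniteMeasureOnCompacts μ] {S : Set (Fin k → ℝ)} (hS : IsCompact S)
    {f : (Fin m → ℝ) × (Fin k → ℝ) → ℂ} {g : (Fin k → ℝ) × (Fin n → ℝ) → ℂ}
    {U : Set (Fin m → ℝ)} {W : Set (Fin n → ℝ)} {l : ℕ} {M N : ℝ}
    (hfM : DerivBoundOn (prodDirs m k) (U ×ˢ S) l M f)
    (hgN : DerivBoundOn (prodDirs k n) (S ×ˢ W) l N g) (hf : ContDiff ℝ ∞ f)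
    (hg : ContDiff ℝ ∞ g) :
    DerivBoundOn (prodDirs m n) (U ×ˢ W) l (M * N * μ.real S) (kerComp μ S f g) := by
  intro vs
  induction vs generalizing f g l with
  | nil =>
    exact fun _ _ q hq =>
      norm_kerComp_le hS.measure_lt_top (fun _ => hfM.norm_le) (fun _ => hgN.norm_le) hq
  | cons v vs ih =>
    intro hl hvs q hq
    obtain ⟨j, rfl⟩ : ∃ j, l = j + 1 := ⟨l - 1, by grind⟩
    have hf₁ : ContDiff ℝ 1 f := hf.of_le (by simp)
    have hg₁ : ContDiff ℝ 1 g := hg.of_le (by simp)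
    have hvs' : ∀ w ∈ vs, w ∈ prodDirs m n := fun w hw => hvs w (by simp [hw])
    have hj : vs.length ≤ j := by simpa using hl
    rcases hvs v (by simp) with ⟨i, rfl⟩ | ⟨i, rfl⟩
    · simp only [itDeriv, dirDeriv_kerComp_fst hS hf₁ hg₁]
      exact ih (hfM.dirDeriv (.inl ⟨i, rfl⟩)) (hgN.mono subset_rfl j.le_succ le_rfl)
        (contDiff_dirDeriv _ hf) hg hj hvs' q hq
    · simp only [itDeriv, dirDeriv_kerComp_snd hS hf₁ hg₁]
      exact ih (hfM.mono subset_rfl j.le_succ le_rfl) (hgN.dirDeriv (.inr ⟨i, rfl⟩))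
        hf (contDiff_dirDeriv _ hg) hj hvs' q hq

end CoordinateDerivatives

section ExponentialKernel

variable {d : ℕ} {S U : Set (Fin d → ℝ)} {H H' : (Fin d → ℝ) × (Fin d → ℝ) → ℂ} {l : ℕ}
  {M δ : ℝ}

lemma contDiff_iterKer (hS : IsCompact S) (hH : ContDiff ℝ ∞ H) (n : ℕ) :
    ContDiff ℝ ∞ (iterKer S H n) := by
  induction n with
  | zero => exact hH
  | succ n ih => exact contDiff_kerComp hS hH ih

lemma derivBoundOn_iterKer (hS : IsCompact S) (hSU : S ⊆ U) (hH : ContDiff ℝ ∞ H)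
    (hM : DerivBoundOn (prodDirs d d) (U ×ˢ U) l M H) (n : ℕ) :
    DerivBoundOn (prodDirs d d) (U ×ˢ U) l (M * (volume.real S * M) ^ n) (iterKer S H n) := by
  induction n with
  | zero => simpa [iterKer] using hM
  | succ n ih =>
    have hcomp := DerivBoundOn.kerComp (μ := volume) hS
      (hM.mono (prod_mono_right hSU) le_rfl le_rfl)
      (ih.mono (prod_mono_left hSU) le_rfl le_rfl) hH (contDiff_iterKer hS hH n)
    exact hcomp.mono subset_rfl le_rfl (by ring_nf; rfl)

lemma iterKer_succ_sub (hS : IsCompact S) (hH : ContDiff ℝ ∞ H) (hH' : ContDiff ℝ ∞ H') (n : ℕ) :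
    iterKer S H (n + 1) - iterKer S H' (n + 1) =
      kerComp volume S (H - H') (iterKer S H n) +
        kerComp volume S H' (iterKer S H n - iterKer S H' n) :=
  kerComp_sub_kerComp hS hH.continuous hH'.continuous (contDiff_iterKer hS hH n).continuous
    (contDiff_iterKer hS hH' n).continuous

lemma derivBoundOn_iterKer_sub (hS : IsCompact S) (hSU : S ⊆ U) (hH : ContDiff ℝ ∞ H)
    (hH' : ContDiff ℝ ∞ H') (hM : DerivBoundOn (prodDirs d d) (U ×ˢ U) l M H)
    (hM' : DerivBoundOn (prodDirs d d) (U ×ˢ U) l M H')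
    (hδ : DerivBoundOn (prodDirs d d) (U ×ˢ U) l δ (H - H')) (n : ℕ) :
    DerivBoundOn (prodDirs d d) (U ×ˢ U) l ((n + 1) * (volume.real S * M) ^ n * δ)
      (iterKer S H n - iterKer S H' n) := by
  induction n with
  | zero => simpa [iterKer] using hδ
  | succ n ih =>
    have hL := contDiff_iterKer hS hH n
    have hL_sub := hL.sub (contDiff_iterKer hS hH' n)
    have hleft := DerivBoundOn.kerComp (μ := volume) hS
      (hδ.mono (prod_mono_right hSU) le_rfl le_rfl)
      ((derivBoundOn_iterKer hS hSU hH hM n).mono (prod_mono_left hSU) le_rfl le_rfl)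
      (hH.sub hH') hL
    have hright := DerivBoundOn.kerComp (μ := volume) hS
      (hM'.mono (prod_mono_right hSU) le_rfl le_rfl)
      (ih.mono (prod_mono_left hSU) le_rfl le_rfl) hH' hL_sub
    rw [iterKer_succ_sub hS hH hH' n]
    refine (hleft.add hright (contDiff_kerComp hS (hH.sub hH') hL)
      (contDiff_kerComp hS hH' hL_sub)).mono subset_rfl le_rfl (le_of_eq ?_)
    push_cast
    ring

/-- The exponential kernel `∑_{n ≥ 1} L_n / n!` of `H`; since `iterKer S H n` is `L_{n+1}`, the
index is shifted by one. -/
noncomputable def expKer (S : Set (Fin d → ℝ)) (H : (Fin d → ℝ) × (Fin d → ℝ) → ℂ) :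
    (Fin d → ℝ) × (Fin d → ℝ) → ℂ :=
  fun q => ∑' n : ℕ, ((n + 1).factorial : ℂ)⁻¹ * iterKer S H n q

lemma summable_expKer (hS : IsCompact S) (hSU : S ⊆ U) (hH : ContDiff ℝ ∞ H)
    (hM : DerivBoundOn (prodDirs d d) (U ×ˢ U) l M H) {q : (Fin d → ℝ) × (Fin d → ℝ)}
    (hq : q ∈ U ×ˢ U) : Summable fun n : ℕ => ((n + 1).factorial : ℂ)⁻¹ * iterKer S H n q := by
  refine .of_norm_bounded
    ((Real.summable_pow_div_factorial (volume.real S * M)).mul_left M) fun n => ?_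
  rw [norm_mul, norm_inv, Complex.norm_natCast]
  calc ((n + 1).factorial : ℝ)⁻¹ * ‖iterKer S H n q‖
      ≤ (n.factorial : ℝ)⁻¹ * (M * (volume.real S * M) ^ n) := by
        gcongr
        · exact n.le_succ
        · exact (derivBoundOn_iterKer hS hSU hH hM n).norm_le hq
    _ = M * ((volume.real S * M) ^ n / n.factorial) := by ring

lemma hasSum_pow_div_factorial_mul (a c : ℝ) :
    HasSum (fun n : ℕ => a ^ n / n.factorial * c) (Real.exp a * c) := by
  rw [Real.exp_eq_exp_ℝ]
  exact (NormedSpace.expSeries_div_hasSum_exp a).mul_right c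

lemma derivBoundOn_expKer_sub (hS : IsCompact S) (hSU : S ⊆ U) (hU : IsOpen U)
    (hH : ContDiff ℝ ∞ H) (hH' : ContDiff ℝ ∞ H')
    (hM : DerivBoundOn (prodDirs d d) (U ×ˢ U) l M H)
    (hM' : DerivBoundOn (prodDirs d d) (U ×ˢ U) l M H')
    (hδ : DerivBoundOn (prodDirs d d) (U ×ˢ U) l δ (H - H')) :
    DerivBoundOn (prodDirs d d) (U ×ˢ U) l (Real.exp (volume.real S * M) * δ)
      (expKer S H - expKer S H') := by
  let F : ℕ → (Fin d → ℝ) × (Fin d → ℝ) → ℂ := fun n =>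
    ((n + 1).factorial : ℂ)⁻¹ • (iterKer S H n - iterKer S H' n)
  have hF : ∀ n, ContDiff ℝ ∞ (F n) := fun n =>
    contDiff_const.smul ((contDiff_iterKer hS hH n).sub (contDiff_iterKer hS hH' n))
  have hF_bound : ∀ n, DerivBoundOn (prodDirs d d) (U ×ˢ U) l
      ((volume.real S * M) ^ n / n.factorial * δ) (F n) := by
    intro n
    refine ((derivBoundOn_iterKer_sub hS hSU hH hH' hM hM' hδ n).const_smul _).mono subset_rfl
      le_rfl (le_of_eq ?_)
    rw [norm_inv, Complex.norm_natCast, Nat.factorial_succ]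
    push_cast
    field_simp
  have hsum : EqOn (fun q => ∑' n, F n q) (expKer S H - expKer S H') (U ×ˢ U) := fun q hq => by
    simpa only [F, expKer, Pi.smul_apply, Pi.sub_apply, smul_eq_mul, mul_sub] using
      (summable_expKer hS hSU hH hM hq).tsum_sub (summable_expKer hS hSU hH' hM' hq)
  refine DerivBoundOn.congr ?_ (hU.prod hU) hsum
  rw [prodDirs_eq_range] at hF_bound ⊢
  exact derivBoundOn_tsum _ (hU.prod hU) (hasSum_pow_div_factorial_mul _ δ) hF hF_bound

end ExponentialKernel

section Nets

/-- A net `(f_ε)_{ε ∈ (0,1]}` is of logarithmic type if every seminorm is `O(|log ε|)` as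
`ε → 0`. -/
def IsLogType {E : Type*} [NormedAddCommGroup E] [NormedSpace ℝ E]
    (B : Set E) (f : ℝ → E → ℂ) : Prop :=
  ∀ A : Set E, IsCompact A → ∀ l : ℕ, ∃ C > (0 : ℝ), ∃ ε₀ ∈ Ioc (0 : ℝ) 1,
    ∀ ε ∈ Ioc (0 : ℝ) 1, ε ≤ ε₀ → pSemi B A l (f ε) ≤ C * |Real.log ε|

lemma exp_mul_abs_log_mul_pow_le_one {a ε : ℝ} {q : ℕ} (ha : a ≤ q) (hε : ε ∈ Ioc (0 : ℝ) 1) :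
    Real.exp (a * |Real.log ε|) * ε ^ q ≤ 1 := by
  have hlog : Real.log ε ≤ 0 := Real.log_nonpos hε.1.le hε.2
  have hpow : ε ^ q = Real.exp (q * Real.log ε) := by rw [Real.exp_nat_mul, Real.exp_log hε.1]
  rw [hpow, ← Real.exp_add, Real.exp_le_one_iff, abs_of_nonpos hlog]
  nlinarith

lemma exp_mul_log_add_mul_pow_le {V C D ε : ℝ} {p q : ℕ} (hV : 0 ≤ V) (hD : 0 ≤ D)
    (hq : V * C ≤ q) (hε : ε ∈ Ioc (0 : ℝ) 1) :
    Real.exp (V * (C * |Real.log ε| + D * ε ^ (p + q))) * (D * ε ^ (p + q)) ≤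
      Real.exp (V * D) * D * ε ^ p := by
  have hε₀ : 0 ≤ ε := hε.1.le
  have hpow : D * ε ^ (p + q) ≤ D := mul_le_of_le_one_right hD (pow_le_one₀ hε₀ hε.2)
  calc Real.exp (V * (C * |Real.log ε| + D * ε ^ (p + q))) * (D * ε ^ (p + q))
      ≤ Real.exp (V * (C * |Real.log ε| + D)) * (D * ε ^ (p + q)) := by gcongr
    _ = Real.exp (V * D) * D * ε ^ p * (Real.exp (V * C * |Real.log ε|) * ε ^ q) := by
        rw [mul_add, Real.exp_add, pow_add, mul_assoc V C]
        ring
    _ ≤ Real.exp (V * D) * D * ε ^ p :=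
        mul_le_of_le_one_right (by positivity) (exp_mul_abs_log_mul_pow_le_one hq hε)

lemma exists_ball_subset_prod {X : Type*} [SeminormedAddCommGroup X] {S : Set X}
    (hS : Bornology.IsBounded S) {A : Set (X × X)} (hA : Bornology.IsBounded A) :
    ∃ R : ℝ, S ⊆ Metric.ball 0 R ∧ A ⊆ Metric.ball 0 R ×ˢ Metric.ball 0 R := by
  obtain ⟨R, hR⟩ := ((hS.prod hS).union hA).subset_ball 0
  rw [← Prod.mk_zero_zero, ← ball_prod_same, union_subset_iff] at hR
  exact ⟨R, fun x hx => (hR.1 (mk_mem_prod hx hx)).1, hR.2⟩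

theorem exponential_kernel_independent_of_representative_general
    {d : ℕ} (S : Set (Fin d → ℝ)) (hS : IsCompact S)
    (H H' : ℝ → (Fin d → ℝ) × (Fin d → ℝ) → ℂ)
    (hsm : ∀ ε ∈ Ioc (0 : ℝ) 1, ContDiff ℝ ∞ (H ε))
    (hsm' : ∀ ε ∈ Ioc (0 : ℝ) 1, ContDiff ℝ ∞ (H' ε))
    (hlog : IsLogType (prodDirs d d) H)
    (hdiff : IsNegligible (prodDirs d d) (fun ε q => H ε q - H' ε q)) :
    IsNegligible (prodDirs d d) (fun ε q => expKer S (H ε) q - expKer S (H' ε) q) := by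
  intro A hA l p
  obtain ⟨R, hSR, hAR⟩ := exists_ball_subset_prod hS.isBounded hA.isBounded
  let T : Set ((Fin d → ℝ) × (Fin d → ℝ)) := Metric.closedBall 0 R ×ˢ Metric.closedBall 0 R
  have hT : IsCompact T := (isCompact_closedBall 0 R).prod (isCompact_closedBall 0 R)
  have hball : Metric.ball 0 R ×ˢ Metric.ball 0 R ⊆ T :=
    prod_mono Metric.ball_subset_closedBall Metric.ball_subset_closedBall
  have hfin : (prodDirs d d).Finite := prodDirs_eq_range d d ▸ finite_range _
  obtain ⟨C, -, ε₁, hε₁, hC⟩ := hlog T hT l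
  obtain ⟨q, hq⟩ := exists_nat_ge (volume.real S * C)
  obtain ⟨D, hD, ε₂, hε₂, hDε⟩ := hdiff T hT l (p + q)
  refine ⟨Real.exp (volume.real S * D) * D, by positivity, min ε₁ ε₂,
    ⟨lt_min hε₁.1 hε₂.1, (min_le_left _ _).trans hε₁.2⟩, fun ε hε hle => ?_⟩
  have hε₀ : 0 < ε := hε.1
  have hH := hsm ε hε
  have hH' := hsm' ε hε
  have hM := (derivBoundOn_pSemi hfin hT l hH).mono hball le_rfl
    (hC ε hε (hle.trans (min_le_left _ _)))
  have hδ : DerivBoundOn (prodDirs d d) (Metric.ball 0 R ×ˢ Metric.ball 0 R) l (D * ε ^ (p + q))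
      (H ε - H' ε) :=
    (derivBoundOn_pSemi hfin hT l (hH.sub hH')).mono hball le_rfl
      (hDε ε hε (hle.trans (min_le_right _ _)))
  have hM' := hM.sub hδ hH (hH.sub hH')
  rw [sub_sub_cancel] at hM'
  have hexp := derivBoundOn_expKer_sub hS hSR Metric.isOpen_ball hH hH'
    (hM.mono subset_rfl le_rfl (le_add_of_nonneg_right (by positivity))) hM' hδ
  exact (hexp.mono hAR le_rfl (exp_mul_log_add_mul_pow_le measureReal_nonneg hD.le hq hε)).pSemi_le
    (by positivity)

end Nets

/-- The exponential kernel does not depend on the representative: if two logarithmic-type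
nets of kernels supported in `K × K` differ by a negligible net, then the corresponding
nets of exponential kernels differ by a negligible net. -/
theorem exponential_kernel_independent_of_representative
    {d : ℕ} (S : Set (Fin d → ℝ)) (hS : IsCompact S)
    (H H' : ℝ → (Fin d → ℝ) × (Fin d → ℝ) → ℂ)
    (hsm : ∀ ε ∈ Ioc (0:ℝ) 1, ContDiff ℝ (⊤:ℕ∞) (H ε))
    (hsm' : ∀ ε ∈ Ioc (0:ℝ) 1, ContDiff ℝ (⊤:ℕ∞) (H' ε))
    (hsupp : ∀ ε ∈ Ioc (0:ℝ) 1, Function.support (H ε) ⊆ S ×ˢ S)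
    (hsupp' : ∀ ε ∈ Ioc (0:ℝ) 1, Function.support (H' ε) ⊆ S ×ˢ S)
    (hlog : ∀ A : Set ((Fin d → ℝ) × (Fin d → ℝ)), IsCompact A → ∀ l : ℕ,
      ∃ C > (0:ℝ), ∃ ε₀ ∈ Ioc (0:ℝ) 1, ∀ ε ∈ Ioc (0:ℝ) 1, ε ≤ ε₀ →
        pSemi (prodDirs d d) A l (H ε) ≤ C * |Real.log ε|)
    (hlog' : ∀ A : Set ((Fin d → ℝ) × (Fin d → ℝ)), IsCompact A → ∀ l : ℕ,
      ∃ C > (0:ℝ), ∃ ε₀ ∈ Ioc (0:ℝ) 1, ∀ ε ∈ Ioc (0:ℝ) 1, ε ≤ ε₀ →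
        pSemi (prodDirs d d) A l (H' ε) ≤ C * |Real.log ε|)
    (hdiff : IsNegligible (prodDirs d d) (fun ε q => H ε q - H' ε q))
    (Sexp Sexp' : ℝ → (Fin d → ℝ) × (Fin d → ℝ) → ℂ)
    (hSexp : ∀ ε q, Sexp ε q = ∑' n : ℕ, (((n+1).factorial : ℂ))⁻¹ * iterKer S (H ε) n q)
    (hSexp' : ∀ ε q, Sexp' ε q = ∑' n : ℕ, (((n+1).factorial : ℂ))⁻¹ * iterKer S (H' ε) n q) :
    IsNegligible (prodDirs d d) (fun ε q => Sexp ε q - Sexp' ε q) := by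
  obtain rfl : Sexp = fun ε => expKer S (H ε) := funext₂ hSexp
  obtain rfl : Sexp' = fun ε => expKer S (H' ε) := funext₂ hSexp'
  exact exponential_kernel_independent_of_representative_general S hS H H' hsm hsm' hlog hdiff
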